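/- arXiv:2311.03868 — 2 statements merged into one kernel-verified Lean document; each statement's English description precedes it below -/
import Mathlib

section
/- If P and Q are B-partitions of a standard Borel probability space both having the re-randomizing property, then their join P∨Q also has the re-randomizing property. -/
open MeasureTheory

/-- The class of the partition (setoid) `s` containing `x`. -/
def Setoid.cls {J : Type*} (s : Setoid J) (x : J) : Set J := {y | s.r x y}

/-- The saturation of a set `A`: the union of all classes of `s` meeting `A`. -/
def Setoid.sat {J : Type*} (s : Setoid J) (A : Set J) : Set J := {x | ∃ y ∈ A, s.r x y}

/-- A partition is a `B`-partition if the saturation of every Borel (measurable) set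
is Borel (measurable). -/
def IsBPartition {J : Type*} [MeasurableSpace J] (s : Setoid J) : Prop :=
  ∀ A : Set J, MeasurableSet A → MeasurableSet (s.sat A)

open scoped Classical

/-- The probability that, picking a `π`-random point and re-randomizing it along `s`
(i.e. replacing it by a uniform random point of its class when that class is finite,
keeping it otherwise), the resulting point lies in `A`. -/
noncomputable def rerandProb {J : Type*} [MeasurableSpace J] (s : Setoid J)
    (π : MeasureTheory.Measure J) (A : Set J) : ℝ :=
  ∫ x, (if (s.cls x).Finite then (Nat.card ↥(s.cls x ∩ A) : ℝ) / (Nat.card ↥(s.cls x))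
        else A.indicator 1 x) ∂π

/-- A partition `s` has the re-randomizing property with respect to `π` if re-randomizing
a `π`-random point along `s` again yields a point distributed according to `π`. -/
def HasRerand {J : Type*} [MeasurableSpace J] (s : Setoid J)
    (π : MeasureTheory.Measure J) : Prop :=
  ∀ A : Set J, MeasurableSet A → rerandProb s π A = (π A).toReal

/-!
Re-randomizing along `s` is a Markov kernel, and `HasRerand s π` says that `π` is invariant under
it. For an invariant `μ` this kernel is self-adjoint, so that `μ.withDensity d` is invariant if and
only if `d` agrees `μ`-almost everywhere with its average over classes.

On the points with infinite class re-randomization along the join does nothing, so suppose that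
almost every class of `P ⊔ Q` is finite. Then `π` is absolutely continuous with respect to its
re-randomization `μ` along `P ⊔ Q`, and `μ` is invariant under re-randomization along `P`, `Q` and
`P ⊔ Q`. As `π` is invariant along `P` and `Q`, its density with respect to `μ` is constant on
almost every class of `P` and of `Q`, hence on almost every class of `P ⊔ Q`, and so `π` is
invariant along `P ⊔ Q`.
-/

open ProbabilityTheory TopologicalSpace
open scoped ENNReal Finset

section Partitions

variable {J : Type*} {s r : Setoid J} {x y : J}

theorem mem_cls_self (s : Setoid J) (x : J) : x ∈ s.cls x := s.refl x

theorem cls_eq_of_mem (h : y ∈ s.cls x) : s.cls y = s.cls x :=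
  Set.ext fun _ ↦ ⟨s.trans h, s.trans (s.symm h)⟩

theorem cls_subset_cls_of_le (h : s ≤ r) (hy : y ∈ r.cls x) : s.cls y ⊆ r.cls x :=
  fun _ hz ↦ r.trans hy (h hz)

theorem sat_sup (P Q : Setoid J) (A : Set J) :
    (P ⊔ Q).sat A = ⋃ n : ℕ, (fun B ↦ P.sat (Q.sat B))^[n] A := by
  let T : ℕ → Set J := fun n ↦ (fun B ↦ P.sat (Q.sat B))^[n] A
  have hT (n) : T (n + 1) = P.sat (Q.sat (T n)) := Function.iterate_succ_apply' _ n A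
  have le_ker {s : Setoid J} (h : ∀ n, s.sat (T n) ⊆ T (n + 1)) :
      s ≤ Setoid.ker (· ∈ ⋃ n, T n) := by
    have mem_of_rel {x y} (hxy : s x y) (hy : y ∈ ⋃ n, T n) : x ∈ ⋃ n, T n := by
      obtain ⟨n, hn⟩ := Set.mem_iUnion.1 hy
      exact Set.mem_iUnion.2 ⟨n + 1, h n ⟨y, hn, hxy⟩⟩
    exact fun x y hxy ↦ propext ⟨mem_of_rel (s.symm hxy), mem_of_rel hxy⟩
  have hP : P ≤ Setoid.ker (· ∈ ⋃ n, T n) := le_ker fun n x ⟨y, hy, hxy⟩ ↦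
    hT n ▸ ⟨y, ⟨y, hy, Q.refl y⟩, hxy⟩
  have hQ : Q ≤ Setoid.ker (· ∈ ⋃ n, T n) := le_ker fun n x hx ↦ hT n ▸ ⟨x, hx, P.refl x⟩
  change (P ⊔ Q).sat A = ⋃ n, T n
  refine subset_antisymm ?_ (Set.iUnion_subset fun n ↦ ?_)
  · rintro x ⟨y, hy, hxy⟩
    exact (sup_le hP hQ hxy).mpr (Set.mem_iUnion.2 ⟨0, hy⟩)
  · induction n with
    | zero => exact fun x hx ↦ ⟨x, hx, (P ⊔ Q).refl x⟩
    | succ n ih =>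
      rw [hT]
      rintro x ⟨y, ⟨z, hz, hyz⟩, hxy⟩
      obtain ⟨w, hw, hzw⟩ := ih hz
      have hxz : (P ⊔ Q) x z :=
        (P ⊔ Q).trans ((le_sup_left : P ≤ P ⊔ Q) hxy) ((le_sup_right : Q ≤ P ⊔ Q) hyz)
      exact ⟨w, hw, (P ⊔ Q).trans hxz hzw⟩

theorem eq_of_mem_cls_sup {β : Type*} {P Q : Setoid J} {f : J → β}
    (hP : ∀ y ∈ (P ⊔ Q).cls x, ∀ z ∈ P.cls y, f z = f y)
    (hQ : ∀ y ∈ (P ⊔ Q).cls x, ∀ z ∈ Q.cls y, f z = f y) (hy : y ∈ (P ⊔ Q).cls x) :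
    f y = f x := by
  let g : J → β := fun z ↦ if z ∈ (P ⊔ Q).cls x then f z else f x
  have le_ker {s : Setoid J} (h : s ≤ P ⊔ Q)
      (hs : ∀ y ∈ (P ⊔ Q).cls x, ∀ z ∈ s.cls y, f z = f y) : s ≤ Setoid.ker g := by
    intro y z hyz
    change g y = g z
    by_cases hy : y ∈ (P ⊔ Q).cls x
    · have hz : z ∈ (P ⊔ Q).cls x := cls_subset_cls_of_le h hy hyz
      simp only [g, if_pos hy, if_pos hz, hs y hy z hyz]
    · have hz : z ∉ (P ⊔ Q).cls x := fun hz ↦ hy (cls_subset_cls_of_le h hz (s.symm hyz))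
      simp only [g, if_neg hy, if_neg hz]
  have hxy : g x = g y := sup_le (le_ker le_sup_left hP) (le_ker le_sup_right hQ) hy
  simpa only [g, if_pos hy, ite_self] using hxy.symm

theorem IsBPartition.sup [MeasurableSpace J] {P Q : Setoid J} (hP : IsBPartition P)
    (hQ : IsBPartition Q) : IsBPartition (P ⊔ Q) := by
  intro A hA
  rw [sat_sup]
  refine MeasurableSet.iUnion fun n ↦ ?_
  induction n with
  | zero => exact hA
  | succ n ih =>
    rw [Function.iterate_succ_apply']
    exact hP _ (hQ _ ih)

theorem sum_inv_card_mul_sum_filter_rel (s : Setoid J) (C : Finset J) (f : J → ℝ≥0∞) :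
    ∑ y ∈ C, (#{z ∈ C | s y z} : ℝ≥0∞)⁻¹ * ∑ z ∈ C with s y z, f z = ∑ z ∈ C, f z := by
  have card_eq {y z} (h : s y z) : #{w ∈ C | s y w} = #{w ∈ C | s z w} := by
    congr 1
    ext w
    simp only [Finset.mem_filter, and_congr_right_iff]
    exact fun _ ↦ ⟨s.trans (s.symm h), s.trans h⟩
  calc ∑ y ∈ C, (#{z ∈ C | s y z} : ℝ≥0∞)⁻¹ * ∑ z ∈ C with s y z, f z
      = ∑ y ∈ C, ∑ z ∈ C with s y z, (#{w ∈ C | s z w} : ℝ≥0∞)⁻¹ * f z := by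
        refine Finset.sum_congr rfl fun y _ ↦ ?_
        rw [Finset.mul_sum]
        exact Finset.sum_congr rfl fun z hz ↦ by rw [card_eq (Finset.mem_filter.1 hz).2]
    _ = ∑ z ∈ C, ∑ y ∈ C with s z y, (#{w ∈ C | s z w} : ℝ≥0∞)⁻¹ * f z := by
        refine Finset.sum_comm' fun y z ↦ ?_
        simp only [Finset.mem_filter, s.comm' (x := y)]
        tauto
    _ = ∑ z ∈ C, f z := by
        refine Finset.sum_congr rfl fun z hz ↦ ?_
        have hne : (#{w ∈ C | s z w} : ℝ≥0∞) ≠ 0 :=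
          Nat.cast_ne_zero.2 (Finset.card_ne_zero_of_mem (Finset.mem_filter.2 ⟨hz, s.refl z⟩))
        rw [Finset.sum_const, nsmul_eq_mul, ← mul_assoc,
          ENNReal.mul_inv_cancel hne (ENNReal.natCast_ne_top _), one_mul]

end Partitions

section Counting

theorem natCast_le_encard_iff_exists_pairwise_disjoint {X : Type*} [TopologicalSpace X]
    [T2Space X] {b : Set (Set X)} (hb : IsTopologicalBasis b) {S : Set X} {m : ℕ} :
    (m : ℕ∞) ≤ S.encard ↔ ∃ u : Fin m → b,
      Pairwise (Function.onFun Disjoint fun i ↦ (u i : Set X)) ∧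
        ∀ i, (S ∩ u i).Nonempty := by
  constructor
  · intro h
    obtain ⟨t, htS, htm⟩ := Set.exists_subset_encard_eq h
    have htfin : t.Finite := Set.finite_of_encard_eq_coe htm
    have := htfin.to_subtype
    have hcard : Nat.card t = m := by
      rw [Nat.card_coe_set_eq, Set.ncard_def, htm, ENat.toNat_natCast]
    let φ : Fin m ≃ t := (Finite.equivFinOfCardEq hcard).symm
    obtain ⟨U, hU, hUdisj⟩ := htfin.t2_separation
    choose V hVb hxV hVU using fun x ↦ hb.exists_subset_of_mem_open (hU x).1 (hU x).2
    refine ⟨fun i ↦ ⟨V (φ i), hVb _⟩, fun i j hij ↦ ?_, fun i ↦ ⟨φ i, htS (φ i).2, hxV _⟩⟩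
    exact (hUdisj (φ i).2 (φ j).2 fun h ↦ hij (φ.injective (Subtype.ext h))).mono
      (hVU _) (hVU _)
  · rintro ⟨u, hu, hne⟩
    choose y hyS hyu using hne
    have hy : Function.Injective y := fun i j hij ↦
      by_contra fun hne ↦ (hu hne).le_bot ⟨hyu i, hij ▸ hyu j⟩
    calc (m : ℕ∞) = (Set.range y).encard := by
          rw [← Set.image_univ, hy.encard_image, Set.encard_univ, ENat.card_eq_coe_fintype_card,
            Fintype.card_fin]
      _ ≤ S.encard := Set.encard_le_encard (Set.range_subset_iff.2 hyS)

open MeasurableSpace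

variable {J : Type*} [MeasurableSpace J] [CountablySeparated J] {s : Setoid J}

theorem IsBPartition.measurableSet_natCast_le_encard (hs : IsBPartition s) {A : Set J}
    (hA : MeasurableSet A) (m : ℕ) : MeasurableSet {x | (m : ℕ∞) ≤ (s.cls x ∩ A).encard} := by
  obtain ⟨e, he, e_inj⟩ := measurable_injection_nat_bool_of_countablySeparated J
  have sat_inter_preimage (V : Set (ℕ → Bool)) :
      s.sat (A ∩ e ⁻¹' V) = {x | (e '' (s.cls x ∩ A) ∩ V).Nonempty} := by
    ext x
    simp only [Setoid.sat, Setoid.cls, Set.mem_ofPred_eq, ← Set.image_inter_preimage,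
      Set.image_nonempty]
    exact exists_congr fun y ↦ ⟨fun h ↦ ⟨⟨h.2, h.1.1⟩, h.1.2⟩, fun h ↦ ⟨⟨h.1.2, h.2⟩, h.1.1⟩⟩
  have key : {x | (m : ℕ∞) ≤ (s.cls x ∩ A).encard} =
      ⋃ u : Fin m → countableBasis (ℕ → Bool),
        ⋃ _ : Pairwise (Function.onFun Disjoint fun i ↦ (u i : Set (ℕ → Bool))),
          ⋂ i, s.sat (A ∩ e ⁻¹' u i) := by
    ext x
    rw [Set.mem_ofPred_eq, ← e_inj.encard_image,
      natCast_le_encard_iff_exists_pairwise_disjoint (isBasis_countableBasis _)]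
    simp only [sat_inter_preimage, Set.mem_iUnion, Set.mem_iInter, Set.mem_ofPred_eq, exists_prop]
  rw [key]
  have hopen (V : countableBasis (ℕ → Bool)) : MeasurableSet (e ⁻¹' V) :=
    he (isOpen_of_mem_countableBasis V.2).measurableSet
  exact .iUnion fun u ↦ .iUnion fun _ ↦ .iInter fun i ↦ hs _ (hA.inter (hopen (u i)))

theorem IsBPartition.measurable_encard (hs : IsBPartition s) {A : Set J} (hA : MeasurableSet A) :
    Measurable fun x ↦ (s.cls x ∩ A).encard := by
  refine ENat.measurable_iff.2 fun n ↦ ?_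
  have : (fun x ↦ (s.cls x ∩ A).encard) ⁻¹' {(n : ℕ∞)} =
      {x | (n : ℕ∞) ≤ (s.cls x ∩ A).encard} \ {x | ((n + 1 : ℕ) : ℕ∞) ≤ (s.cls x ∩ A).encard} := by
    ext x
    simp only [Set.mem_preimage, Set.mem_singleton_iff, Set.mem_sdiff, Set.mem_ofPred_eq,
      Nat.cast_add_one, ENat.add_one_le_iff (ENat.natCast_ne_top n), not_lt]
    exact ⟨fun h ↦ ⟨h.ge, h.le⟩, fun h ↦ h.2.antisymm h.1⟩
  rw [this]
  exact (hs.measurableSet_natCast_le_encard hA n).diff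
    (hs.measurableSet_natCast_le_encard hA (n + 1))

theorem IsBPartition.measurableSet_finite_cls (hs : IsBPartition s) :
    MeasurableSet {x | (s.cls x).Finite} := by
  have : {x | (s.cls x).Finite} = (fun x ↦ (s.cls x ∩ Set.univ).encard) ⁻¹' {⊤}ᶜ := by
    ext x
    simp only [Set.mem_ofPred_eq, Set.inter_univ, Set.mem_preimage, Set.mem_compl_singleton_iff,
      Set.encard_ne_top_iff]
  rw [this]
  exact hs.measurable_encard .univ .of_discrete

end Counting

section Kernels

variable {α : Type*} [MeasurableSpace α] {κ : Kernel α α} {μ : Measure α}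

theorem lintegral_lintegral_of_invariant (hμ : κ.Invariant μ) {f : α → ℝ≥0∞}
    (hf : Measurable f) : ∫⁻ x, ∫⁻ y, f y ∂κ x ∂μ = ∫⁻ x, f x ∂μ := by
  conv_rhs => rw [← hμ.def]
  exact (Measure.lintegral_bind κ.aemeasurable hf.aemeasurable).symm

theorem invariant_comp_of_ae_invariant {η : Kernel α α} (h : ∀ᵐ x ∂μ, κ.Invariant (η x)) :
    κ.Invariant (η ∘ₘ μ) := by
  rw [Kernel.Invariant, Measure.comp_assoc]
  exact Measure.comp_congr (h.mono fun x hx ↦ by rw [Kernel.comp_apply, hx.def])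

/-- A kernel is *resampling* if a point drawn from `κ x` almost surely has the same transition law
as `x`. For such kernels invariance of a measure implies reversibility, as for the conditional
distributions given a σ-algebra. -/
def IsResampling (κ : Kernel α α) : Prop := ∀ x, ∀ᵐ y ∂κ x, κ y = κ x

theorem IsResampling.lintegral_mul_lintegral (hκ : IsResampling κ) {f : α → ℝ≥0∞}
    (hf : Measurable f) (g : α → ℝ≥0∞) (x : α) :
    ∫⁻ y, f y * ∫⁻ z, g z ∂κ y ∂κ x = (∫⁻ y, f y ∂κ x) * ∫⁻ z, g z ∂κ x := by
  rw [← lintegral_mul_const _ hf]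
  exact lintegral_congr_ae ((hκ x).mono fun y hy ↦ by simp only [hy])

theorem IsResampling.lintegral_mul_lintegral_comm (hκ : IsResampling κ) (hμ : κ.Invariant μ)
    {f g : α → ℝ≥0∞} (hf : Measurable f) (hg : Measurable g) :
    ∫⁻ x, f x * ∫⁻ y, g y ∂κ x ∂μ = ∫⁻ x, (∫⁻ y, f y ∂κ x) * g x ∂μ := by
  have symm_form {f g : α → ℝ≥0∞} (hf : Measurable f) (hg : Measurable g) :
      ∫⁻ x, f x * ∫⁻ y, g y ∂κ x ∂μ = ∫⁻ x, (∫⁻ y, f y ∂κ x) * ∫⁻ y, g y ∂κ x ∂μ := by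
    rw [← lintegral_lintegral_of_invariant hμ (hf.fun_mul hg.lintegral_kernel)]
    simp only [hκ.lintegral_mul_lintegral hf]
  rw [symm_form hf hg]
  simp only [mul_comm _ (g _), symm_form hg hf, mul_comm]

theorem IsResampling.comp_withDensity (hκ : IsResampling κ) (hμ : κ.Invariant μ) {d : α → ℝ≥0∞}
    (hd : Measurable d) : κ ∘ₘ μ.withDensity d = μ.withDensity fun x ↦ ∫⁻ y, d y ∂κ x := by
  ext A hA
  have hA' : Measurable (A.indicator (1 : α → ℝ≥0∞)) := measurable_one.indicator hA
  calc (κ ∘ₘ μ.withDensity d) A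
      = ∫⁻ x, d x * ∫⁻ y, A.indicator 1 y ∂κ x ∂μ := by
        simp only [lintegral_indicator_one hA]
        rw [Measure.bind_apply hA κ.aemeasurable,
          lintegral_withDensity_eq_lintegral_mul _ hd (κ.measurable_coe hA)]
        rfl
    _ = ∫⁻ x, (∫⁻ y, d y ∂κ x) * A.indicator 1 x ∂μ :=
        hκ.lintegral_mul_lintegral_comm hμ hd hA'
    _ = μ.withDensity (fun x ↦ ∫⁻ y, d y ∂κ x) A := by
        rw [withDensity_apply _ hA, ← lintegral_indicator hA]
        simp only [Set.indicator, Pi.one_apply, mul_ite, mul_one, mul_zero]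

theorem IsResampling.invariant_withDensity_iff [SigmaFinite μ] (hκ : IsResampling κ)
    (hμ : κ.Invariant μ) {d : α → ℝ≥0∞} (hd : Measurable d) :
    κ.Invariant (μ.withDensity d) ↔ ∀ᵐ x ∂μ, d x = ∫⁻ y, d y ∂κ x := by
  rw [Kernel.Invariant, hκ.comp_withDensity hμ hd, eq_comm]
  exact withDensity_eq_iff_of_sigmaFinite hd.aemeasurable hd.lintegral_kernel.aemeasurable

end Kernels

section RerandMeasure

variable {J : Type*} [MeasurableSpace J] {s : Setoid J} {x y : J}

/-- The law of the point obtained by re-randomizing `x` along `s`: as in `rerandProb`, the point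
is kept when its class is infinite. -/
noncomputable def rerandMeasure (s : Setoid J) (x : J) : Measure J :=
  if (s.cls x).Finite then uniformOn (s.cls x) else Measure.dirac x

theorem rerandMeasure_of_finite (hx : (s.cls x).Finite) :
    rerandMeasure s x = uniformOn (s.cls x) :=
  if_pos hx

theorem rerandMeasure_of_infinite (hx : (s.cls x).Infinite) :
    rerandMeasure s x = Measure.dirac x :=
  if_neg hx

theorem rerandMeasure_eq_of_mem (hx : (s.cls x).Finite) (hy : y ∈ s.cls x) :
    rerandMeasure s y = rerandMeasure s x := by
  rw [rerandMeasure, rerandMeasure, cls_eq_of_mem hy, if_pos hx, if_pos hx]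

variable [MeasurableSingletonClass J]

theorem isProbabilityMeasure_rerandMeasure (s : Setoid J) (x : J) :
    IsProbabilityMeasure (rerandMeasure s x) := by
  rw [rerandMeasure]
  split_ifs with h
  · exact isProbabilityMeasure_uniformOn h ⟨x, mem_cls_self s x⟩
  · infer_instance

theorem rerandMeasure_apply_of_finite (hx : (s.cls x).Finite) (A : Set J) :
    rerandMeasure s x A = (s.cls x ∩ A).encard / (s.cls x).encard := by
  rw [rerandMeasure_of_finite hx, uniformOn, cond_apply hx.measurableSet,
    Measure.count_apply hx.measurableSet, Measure.count_apply (hx.inter_of_left A).measurableSet,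
    ENNReal.div_eq_inv_mul]

theorem ae_rerandMeasure_iff_of_finite (hx : (s.cls x).Finite) {p : J → Prop} :
    (∀ᵐ y ∂rerandMeasure s x, p y) ↔ ∀ y ∈ s.cls x, p y := by
  rw [ae_iff, rerandMeasure_of_finite hx, uniformOn_eq_zero_iff hx]
  simp only [Set.eq_empty_iff_forall_notMem, Set.mem_inter_iff, Set.mem_ofPred_eq, not_and,
    not_not]

theorem ae_rerandMeasure_of_forall_mem {p : J → Prop} (h : ∀ y ∈ s.cls x, p y) :
    ∀ᵐ y ∂rerandMeasure s x, p y := by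
  by_cases hx : (s.cls x).Finite
  · exact (ae_rerandMeasure_iff_of_finite hx).2 h
  · rw [rerandMeasure_of_infinite hx, ae_dirac_eq]
    exact h x (mem_cls_self s x)

theorem ae_rerandMeasure_eq (s : Setoid J) (x : J) :
    ∀ᵐ y ∂rerandMeasure s x, rerandMeasure s y = rerandMeasure s x := by
  by_cases hx : (s.cls x).Finite
  · exact ae_rerandMeasure_of_forall_mem fun y hy ↦ rerandMeasure_eq_of_mem hx hy
  · rw [rerandMeasure_of_infinite hx, ae_dirac_eq]
    exact rerandMeasure_of_infinite hx

theorem dirac_absolutelyContinuous_rerandMeasure (s : Setoid J) (x : J) :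
    Measure.dirac x ≪ rerandMeasure s x := by
  by_cases hx : (s.cls x).Finite
  · refine Measure.AbsolutelyContinuous.mk fun A hA h ↦ ?_
    rw [measure_eq_zero_iff_ae_notMem, ae_rerandMeasure_iff_of_finite hx] at h
    rw [Measure.dirac_apply' x hA, Set.indicator_of_notMem (h x (mem_cls_self s x))]
  · rw [rerandMeasure_of_infinite hx]

theorem lintegral_rerandMeasure_of_forall_mem_eq {f : J → ℝ≥0∞}
    (h : ∀ y ∈ s.cls x, f y = f x) : ∫⁻ y, f y ∂rerandMeasure s x = f x := by
  have := isProbabilityMeasure_rerandMeasure s x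
  rw [lintegral_congr_ae (ae_rerandMeasure_of_forall_mem h), lintegral_const, measure_univ,
    mul_one]

theorem lintegral_uniformOn_finset (C : Finset J) (f : J → ℝ≥0∞) :
    ∫⁻ y, f y ∂uniformOn (C : Set J) = (#C : ℝ≥0∞)⁻¹ * ∑ y ∈ C, f y := by
  rw [uniformOn, ProbabilityTheory.cond, lintegral_smul_measure, lintegral_finset,
    Measure.count_apply_finset, smul_eq_mul]
  simp only [Measure.count_singleton, mul_one]

theorem eq_lintegral_rerandMeasure_sup {P Q : Setoid J} {d : J → ℝ≥0∞}
    (hx : ((P ⊔ Q).cls x).Finite)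
    (hP : ∀ y ∈ (P ⊔ Q).cls x, d y = ∫⁻ z, d z ∂rerandMeasure P y)
    (hQ : ∀ y ∈ (P ⊔ Q).cls x, d y = ∫⁻ z, d z ∂rerandMeasure Q y) (hy : y ∈ (P ⊔ Q).cls x) :
    d y = ∫⁻ z, d z ∂rerandMeasure (P ⊔ Q) y := by
  have const_on_cls {s : Setoid J} (h : s ≤ P ⊔ Q)
      (hs : ∀ y ∈ (P ⊔ Q).cls x, d y = ∫⁻ z, d z ∂rerandMeasure s y) :
      ∀ y ∈ (P ⊔ Q).cls x, ∀ z ∈ s.cls y, d z = d y := by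
    intro y hy z hz
    have hsub : s.cls y ⊆ (P ⊔ Q).cls x := cls_subset_cls_of_le h hy
    rw [hs y hy, hs z (hsub hz), rerandMeasure_eq_of_mem (hx.subset hsub) hz]
  have d_eq {z} (hz : z ∈ (P ⊔ Q).cls x) : d z = d x :=
    eq_of_mem_cls_sup (const_on_cls le_sup_left hP) (const_on_cls le_sup_right hQ) hz
  exact (lintegral_rerandMeasure_of_forall_mem_eq fun z hz ↦
    (d_eq ((cls_eq_of_mem hy).subset hz)).trans (d_eq hy).symm).symm

end RerandMeasure

section RerandKernel

open MeasurableSpace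

attribute [local instance] measurableSingletonClass_of_countablySeparated

variable {J : Type*} [MeasurableSpace J] [CountablySeparated J] {s r P Q : Setoid J}
  {π : Measure J}

theorem IsBPartition.measurable_rerandMeasure (hs : IsBPartition s) :
    Measurable (rerandMeasure s) := by
  refine Measure.measurable_of_measurable_coe _ fun A hA ↦ ?_
  have apply_eq (x : J) : rerandMeasure s x A = if x ∈ {x | (s.cls x).Finite} then
      ((s.cls x ∩ A).encard / (s.cls x ∩ Set.univ).encard : ℝ≥0∞) else A.indicator 1 x := by
    split_ifs with hx
    · rw [rerandMeasure_apply_of_finite hx, Set.inter_univ]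
    · rw [rerandMeasure_of_infinite hx, Measure.dirac_apply' _ hA]
  have measurable_encard {B : Set J} (hB : MeasurableSet B) :
      Measurable fun x ↦ ((s.cls x ∩ B).encard : ℝ≥0∞) :=
    Measurable.of_discrete.comp (hs.measurable_encard hB)
  simp only [apply_eq]
  exact Measurable.ite hs.measurableSet_finite_cls
    ((measurable_encard hA).div (measurable_encard .univ)) (measurable_one.indicator hA)

/-- The Markov kernel of re-randomization along a `B`-partition. -/
noncomputable def IsBPartition.rerandKernel (hs : IsBPartition s) : Kernel J J where
  toFun := rerandMeasure s
  measurable' := hs.measurable_rerandMeasure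

instance (hs : IsBPartition s) : IsMarkovKernel hs.rerandKernel :=
  ⟨isProbabilityMeasure_rerandMeasure s⟩

theorem IsBPartition.isResampling_rerandKernel (hs : IsBPartition s) :
    IsResampling hs.rerandKernel :=
  ae_rerandMeasure_eq s

theorem IsBPartition.rerandProb_eq [IsFiniteMeasure π] (hs : IsBPartition s) {A : Set J}
    (hA : MeasurableSet A) : rerandProb s π A = ((hs.rerandKernel ∘ₘ π) A).toReal := by
  have hm : Measurable fun x ↦ hs.rerandKernel x A := Kernel.measurable_coe _ hA
  rw [Measure.bind_apply hA hs.rerandKernel.aemeasurable,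
    ← integral_toReal hm.aemeasurable (.of_forall fun x ↦ measure_lt_top _ _), rerandProb]
  congr 1 with x
  change _ = (rerandMeasure s x A).toReal
  split_ifs with hx
  · have toReal_encard (B : Set J) : (B.encard : ℝ≥0∞).toReal = Nat.card B := by
      rw [Nat.card_coe_set_eq, Set.ncard_def]
      cases B.encard <;> simp
    rw [rerandMeasure_apply_of_finite hx, ENNReal.toReal_div, toReal_encard, toReal_encard]
  · rw [rerandMeasure_of_infinite hx, Measure.dirac_apply' _ hA]
    by_cases hxA : x ∈ A <;> simp [hxA]

theorem IsBPartition.hasRerand_iff_invariant_rerandKernel [IsFiniteMeasure π]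
    (hs : IsBPartition s) : HasRerand s π ↔ hs.rerandKernel.Invariant π := by
  rw [Kernel.Invariant, Measure.ext_iff]
  refine forall₂_congr fun A hA ↦ ?_
  rw [hs.rerandProb_eq hA,
    ENNReal.toReal_eq_toReal_iff' (measure_ne_top _ A) (measure_ne_top π A)]

theorem IsBPartition.invariant_rerandKernel_of_ae_infinite (hs : IsBPartition s)
    (hπ : ∀ᵐ x ∂π, (s.cls x).Infinite) : hs.rerandKernel.Invariant π := by
  rw [Kernel.Invariant, Measure.comp_congr (η := Kernel.id)
    (hπ.mono fun x hx ↦ (rerandMeasure_of_infinite hx).trans (Kernel.id_apply x).symm)]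
  exact Measure.id_comp

theorem IsBPartition.invariant_rerandKernel_restrict (hs : IsBPartition s)
    (hπ : hs.rerandKernel.Invariant π) {S : Set J} (hS : MeasurableSet S)
    (hsat : ∀ x ∈ S, s.cls x ⊆ S) :
    hs.rerandKernel.Invariant (π.restrict S) := by
  rw [← withDensity_indicator_one hS, Kernel.Invariant,
    hs.isResampling_rerandKernel.comp_withDensity hπ (measurable_one.indicator hS)]
  congr 1 with x
  refine lintegral_rerandMeasure_of_forall_mem_eq fun y hy ↦ ?_
  have mem_iff : y ∈ S ↔ x ∈ S := ⟨fun h ↦ hsat y h (s.symm hy), fun h ↦ hsat x h hy⟩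
  simp only [Set.indicator, mem_iff, Pi.one_apply]

theorem IsBPartition.invariant_rerandKernel_uniformOn (hs : IsBPartition s) {C : Set J}
    (hC : C.Finite) (hsat : ∀ x ∈ C, s.cls x ⊆ C) : hs.rerandKernel.Invariant (uniformOn C) := by
  lift C to Finset J using hC
  have rerand_eq (y) (hy : y ∈ C) :
      rerandMeasure s y = uniformOn (↑({z ∈ C | s y z} : Finset J) : Set J) := by
    have hcls : s.cls y = ↑({z ∈ C | s y z} : Finset J) := by
      ext z
      simpa only [Finset.coe_filter, Set.mem_ofPred_eq] using
        ⟨fun hz ↦ ⟨hsat y hy hz, hz⟩, fun hz ↦ hz.2⟩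
    rw [← hcls, rerandMeasure_of_finite (hcls ▸ Finset.finite_toSet _)]
  refine Measure.ext_of_lintegral _ fun f hf ↦ ?_
  rw [Measure.lintegral_bind hs.rerandKernel.aemeasurable hf.aemeasurable,
    lintegral_uniformOn_finset, lintegral_uniformOn_finset,
    ← sum_inv_card_mul_sum_filter_rel s C f]
  congr 1
  refine Finset.sum_congr rfl fun y hy ↦ ?_
  exact (rerand_eq y hy ▸ lintegral_uniformOn_finset _ f :)

theorem IsBPartition.invariant_rerandKernel_comp_of_le (hs : IsBPartition s) (hr : IsBPartition r)
    (h : s ≤ r) (hπ : ∀ᵐ x ∂π, (r.cls x).Finite) :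
    hs.rerandKernel.Invariant (hr.rerandKernel ∘ₘ π) := by
  refine invariant_comp_of_ae_invariant (hπ.mono fun x hx ↦ ?_)
  change hs.rerandKernel.Invariant (rerandMeasure r x)
  rw [rerandMeasure_of_finite hx]
  exact hs.invariant_rerandKernel_uniformOn hx fun y hy ↦ cls_subset_cls_of_le h hy

theorem IsBPartition.absolutelyContinuous_comp_rerandKernel (hs : IsBPartition s)
    (π : Measure J) : π ≪ hs.rerandKernel ∘ₘ π := by
  have h := Measure.AbsolutelyContinuous.comp_left (κ := Kernel.id) (η := hs.rerandKernel) π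
    (.of_forall fun x ↦ Kernel.id_apply x ▸ dirac_absolutelyContinuous_rerandMeasure s x)
  rwa [Measure.id_comp] at h

theorem IsBPartition.invariant_rerandKernel_sup_of_ae_finite [IsFiniteMeasure π]
    (hP : IsBPartition P) (hQ : IsBPartition Q) (hπP : hP.rerandKernel.Invariant π)
    (hπQ : hQ.rerandKernel.Invariant π) (hπ : ∀ᵐ x ∂π, ((P ⊔ Q).cls x).Finite) :
    (hP.sup hQ).rerandKernel.Invariant π := by
  have hR : IsBPartition (P ⊔ Q) := hP.sup hQ
  let μ := hR.rerandKernel ∘ₘ π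
  let d := π.rnDeriv μ
  have hd : Measurable d := Measure.measurable_rnDeriv π μ
  have hμd : μ.withDensity d = π :=
    Measure.withDensity_rnDeriv_eq π μ (hR.absolutelyContinuous_comp_rerandKernel π)
  have invariant_iff {s : Setoid J} (hs : IsBPartition s) (h : s ≤ P ⊔ Q) :
      hs.rerandKernel.Invariant π ↔ ∀ᵐ x ∂μ, d x = ∫⁻ y, d y ∂rerandMeasure s x := by
    have hμ : hs.rerandKernel.Invariant μ := hs.invariant_rerandKernel_comp_of_le hR h hπ
    have h_iff := hs.isResampling_rerandKernel.invariant_withDensity_iff hμ hd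
    rwa [hμd] at h_iff
  rw [invariant_iff hP le_sup_left] at hπP
  rw [invariant_iff hQ le_sup_right] at hπQ
  rw [invariant_iff hR le_rfl]
  refine Measure.ae_comp_of_ae_ae
    (measurableSet_eq_fun hd (hd.lintegral_kernel (κ := hR.rerandKernel))) ?_
  filter_upwards [hπ, Measure.ae_ae_of_ae_comp hπP, Measure.ae_ae_of_ae_comp hπQ]
    with x hx hxP hxQ
  rw [IsBPartition.rerandKernel, Kernel.coe_mk, ae_rerandMeasure_iff_of_finite hx] at hxP hxQ ⊢
  exact fun y ↦ eq_lintegral_rerandMeasure_sup hx hxP hxQ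

theorem IsBPartition.invariant_rerandKernel_sup [IsFiniteMeasure π] (hP : IsBPartition P)
    (hQ : IsBPartition Q) (hπP : hP.rerandKernel.Invariant π)
    (hπQ : hQ.rerandKernel.Invariant π) : (hP.sup hQ).rerandKernel.Invariant π := by
  have hR : IsBPartition (P ⊔ Q) := hP.sup hQ
  let F := {x | ((P ⊔ Q).cls x).Finite}
  have hF : MeasurableSet F := hR.measurableSet_finite_cls
  have hsat {s : Setoid J} (h : s ≤ P ⊔ Q) : ∀ x ∈ F, s.cls x ⊆ F := fun x hx y hy ↦ by
    change ((P ⊔ Q).cls y).Finite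
    rwa [cls_eq_of_mem (h hy)]
  have hfin : hR.rerandKernel.Invariant (π.restrict F) :=
    hP.invariant_rerandKernel_sup_of_ae_finite hQ
      (hP.invariant_rerandKernel_restrict hπP hF (hsat le_sup_left))
      (hQ.invariant_rerandKernel_restrict hπQ hF (hsat le_sup_right)) (ae_restrict_mem hF)
  have hinf : hR.rerandKernel.Invariant (π.restrict Fᶜ) :=
    hR.invariant_rerandKernel_of_ae_infinite (ae_restrict_mem hF.compl)
  rw [← Measure.restrict_add_restrict_compl (μ := π) hF, Kernel.Invariant, Measure.comp_add,
    hfin.def, hinf.def]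

end RerandKernel

theorem hasRerand_join_general {J : Type*} [MeasurableSpace J]
    [MeasurableSpace.CountablySeparated J] {π : Measure J} [IsFiniteMeasure π] {P Q : Setoid J}
    (hP : IsBPartition P) (hQ : IsBPartition Q) (hreP : HasRerand P π) (hreQ : HasRerand Q π) :
    HasRerand (P ⊔ Q) π := by
  rw [hP.hasRerand_iff_invariant_rerandKernel] at hreP
  rw [hQ.hasRerand_iff_invariant_rerandKernel] at hreQ
  rw [(hP.sup hQ).hasRerand_iff_invariant_rerandKernel]
  exact hP.invariant_rerandKernel_sup hQ hreP hreQ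

/-- If `P` and `Q` are `B`-partitions of a standard Borel probability
space, both having the re-randomizing property, then their join `P ⊔ Q` also has the
re-randomizing property. -/
theorem hasRerand_join {J : Type*} [MeasurableSpace J] [StandardBorelSpace J]
    (π : MeasureTheory.Measure J) [IsProbabilityMeasure π]
    (P Q : Setoid J) (hP : IsBPartition P) (hQ : IsBPartition Q)
    (hreP : HasRerand P π) (hreQ : HasRerand Q π) :
    HasRerand (P ⊔ Q) π := by
  exact hasRerand_join_general hP hQ hreP hreQ
end

section
/- Let G = (J,B,E,λ) be a hyperfinite graphing in which every connected component is a tree. Then for every Borel set U ⊆ E, ρ(U) = (d̄/2)·η(U), where ρ is the normalized rank, d̄ the average degree, and η the edge measure. In particular ρ restricted to Borel subsets of E is a measure and ρ(E) = d̄/2. -/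
open MeasureTheory

/-- A graphing: a bounded-degree Borel graph `(J, E)` on a standard Borel space together
with a probability measure `μ` satisfying the measure-preservation (intrinsic
mass-transport) equation `∫_A deg_B = ∫_B deg_A`. -/
structure Graphing (J : Type*) [MeasurableSpace J] where
  /-- the (symmetric) adjacency relation -/
  E : J → J → Prop
  symm : ∀ x y, E x y → E y x
  measE : MeasurableSet {p : J × J | E p.1 p.2}
  /-- the underlying probability measure -/
  μ : Measure J
  prob : IsProbabilityMeasure μ
  /-- the degree bound -/
  D : ℕ
  degFin : ∀ x, {y | E x y}.Finite
  degBound : ∀ x, ({y | E x y}).ncard ≤ D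
  mp : ∀ A B : Set J, MeasurableSet A → MeasurableSet B →
    ∫ x in A, (({y ∈ B | E x y}).ncard : ℝ) ∂μ = ∫ x in B, (({y ∈ A | E x y}).ncard : ℝ) ∂μ

namespace Graphing

variable {J : Type*} [MeasurableSpace J]

/-- The edge set of a graphing, as a (symmetric) set of ordered pairs. -/
def edgeSet (G : Graphing J) : Set (J × J) := {p | G.E p.1 p.2}

/-- A Borel symmetric subset of the edge set of `G`. -/
def IsEdgeSubset (G : Graphing J) (X : Set (J × J)) : Prop :=
  MeasurableSet X ∧ (∀ x y, (x, y) ∈ X → (y, x) ∈ X) ∧ X ⊆ G.edgeSet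

/-- The vertex set of the connected component of `x` in the graph with edge set `X`. -/
def compo (X : Set (J × J)) (x : J) : Set J :=
  {y | Relation.ReflTransGen (fun a b => (a, b) ∈ X) x y}

/-- The number of edges of `X` incident with `x`. -/
noncomputable def degX (X : Set (J × J)) (x : J) : ℕ := ({y | (x, y) ∈ X}).ncard

/-- The average degree `d̄` of a graphing. -/
noncomputable def avgDeg (G : Graphing J) : ℝ := ∫ x, (({y | G.E x y}).ncard : ℝ) ∂G.μ

/-- The edge measure `η` of a graphing: `η(X) = (1/d̄) ∫ deg_X dμ`. -/
noncomputable def eta (G : Graphing J) (X : Set (J × J)) : ℝ :=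
  (∫ x, (degX X x : ℝ) ∂G.μ) / G.avgDeg

/-- The normalized rank `ρ(X) = 1 − E_u(1/|V(G^X_u)|)` of a Borel edge set `X`, with the
convention `1/|V| = 0` for infinite components (`Nat.card` of an infinite set is `0`). -/
noncomputable def rho (G : Graphing J) (X : Set (J × J)) : ℝ :=
  1 - ∫ x, (1 : ℝ) / (Nat.card ↥(compo X x)) ∂G.μ

/-- A graphing is hyperfinite if edge sets of arbitrarily small edge measure can be
removed so that only finite connected components remain. -/
def Hyperfinite (G : Graphing J) : Prop :=
  ∀ ε : ℝ, 0 < ε → ∃ X : Set (J × J), G.IsEdgeSubset X ∧ G.eta X < ε ∧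
    ∀ x : J, (compo (G.edgeSet \ X) x).Finite

/-- A set of edges is a forest if for every edge `(a,b)` there is no path from `a` to `b`
avoiding that edge; equivalently, the graph it spans has no cycles. -/
def IsForestSet (X : Set (J × J)) : Prop :=
  ∀ a b : J, (a, b) ∈ X →
    ¬ Relation.ReflTransGen
        (fun u v => (u, v) ∈ X ∧ ¬((u = a ∧ v = b) ∨ (u = b ∧ v = a))) a b

/-- A graphing is a forest (all components are trees) if its edge set is a forest. -/
def IsForest (G : Graphing J) : Prop := IsForestSet G.edgeSet

end Graphing

/-! Orient every edge of a finite tree `C` and let the arc `(x, y)` carry the share of the vertices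
of `C` that lie beyond `y` as seen from `x`. The shares of an arc and of its reverse add up to `1`,
while the arcs leaving `x` reach every vertex other than `x` exactly once and so carry
`1 - 1 / |C|` in total. Since the edge measure of a graphing is invariant under reversing arcs,
integrating these two facts shows that a Borel forest with finite components satisfies
`∫ deg = 2 (1 - ∫ 1 / |C|)`. For a hyperfinite graphing, Borel–Cantelli yields a decreasing sequence
of edge sets with null intersection whose complements have finite components, and monotone
convergence carries the identity from the complements to the whole forest. -/

open Set Filter ProbabilityTheory
open scoped ENNReal SetRel Topology

theorem toReal_count_eq_ncard {X : Type*} [MeasurableSpace X] [MeasurableSingletonClass X]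
    (s : Set X) : (Measure.count s).toReal = s.ncard := by
  obtain hs | hs := s.finite_or_infinite
  · rw [Measure.count_apply hs.measurableSet, ← hs.cast_ncard_eq, ENat.toENNReal_coe,
      ENNReal.toReal_natCast]
  · rw [Measure.count_apply_infinite hs, hs.ncard, ENNReal.toReal_top, Nat.cast_zero]

section BoundedSections

variable {X Y Z : Type*}

/-- The points of `U` that are not the largest point of `U` in their vertical section. Removing
the largest points lowers the size of every section by one, which is how Borel sets with bounded
finite sections are handled by induction. -/
def nonmaximalPart [LT Y] (U : Set (X × Y)) : Set (X × Y) :=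
  {q ∈ U | ∃ z, (q.1, z) ∈ U ∧ q.2 < z}

theorem nonmaximalPart_subset [LT Y] (U : Set (X × Y)) : nonmaximalPart U ⊆ U := sep_subset _ _

theorem injOn_fst_sdiff_nonmaximalPart [LinearOrder Y] (U : Set (X × Y)) :
    InjOn Prod.fst (U \ nonmaximalPart U) := by
  rintro ⟨x, y⟩ ⟨hy, hy'⟩ ⟨_, z⟩ ⟨hz, hz'⟩ rfl
  have hyz : ¬ y < z := fun h => hy' ⟨hy, z, hz, h⟩
  have hzy : ¬ z < y := fun h => hz' ⟨hz, y, hy, h⟩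
  rw [le_antisymm (not_lt.1 hzy) (not_lt.1 hyz)]

theorem encard_le_of_ssubset_of_encard_le_add_one {s t : Set X} {n : ℕ} (h : s ⊂ t)
    (ht : t.encard ≤ n + 1) : s.encard ≤ n := by
  have hfin : t.Finite := finite_of_encard_le_coe (k := n + 1) (mod_cast ht)
  exact (ENat.lt_add_one_iff (ENat.natCast_ne_top n)).1
    (((hfin.subset h.subset).encard_lt_encard h).trans_le ht)

theorem encard_section_nonmaximalPart_le [LinearOrder Y] {U : Set (X × Y)} {n : ℕ} {x : X}
    (hU : (Prod.mk x ⁻¹' U).encard ≤ n + 1) :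
    (Prod.mk x ⁻¹' nonmaximalPart U).encard ≤ n := by
  obtain hempty | hne := (Prod.mk x ⁻¹' U).eq_empty_or_nonempty
  · have hsub := preimage_mono (f := Prod.mk x) (nonmaximalPart_subset U)
    rw [hempty] at hsub
    simp [subset_empty_iff.1 hsub]
  · have hfin : (Prod.mk x ⁻¹' U).Finite := finite_of_encard_le_coe (k := n + 1) (mod_cast hU)
    obtain ⟨m, hm, hmax⟩ := exists_max_image _ id hfin hne
    refine encard_le_of_ssubset_of_encard_le_add_one
      (ssubset_iff_of_subset (preimage_mono (nonmaximalPart_subset U)) |>.2 ⟨m, hm, ?_⟩) hU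
    rintro ⟨-, z, hz, hlt⟩
    exact (hmax z hz).not_gt hlt

theorem encard_section_relComp_le {R : SetRel X Y} {S : SetRel Y Z} {m n : ℕ}
    (hR : ∀ x, (Prod.mk x ⁻¹' R).encard ≤ m) (hS : ∀ y, (Prod.mk y ⁻¹' S).encard ≤ n) (x : X) :
    (Prod.mk x ⁻¹' (R ○ S)).encard ≤ (m * n : ℕ) := by
  have hfin : (Prod.mk x ⁻¹' R).Finite := finite_of_encard_le_coe (hR x)
  have hsection : Prod.mk x ⁻¹' (R ○ S) = ⋃ y ∈ hfin.toFinset, Prod.mk y ⁻¹' S := by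
    ext z
    simp
  calc (Prod.mk x ⁻¹' (R ○ S)).encard
      ≤ ∑ y ∈ hfin.toFinset, (Prod.mk y ⁻¹' S).encard :=
        hsection ▸ Finset.set_encard_biUnion_le _ _
    _ ≤ hfin.toFinset.card • (n : ℕ∞) := Finset.sum_le_card_nsmul _ _ _ fun y _ => hS y
    _ ≤ (m * n : ℕ) := by
        have hcard : (hfin.toFinset.card : ℕ∞) ≤ m := hfin.encard_eq_coe_toFinset_card ▸ hR x
        rw [nsmul_eq_mul, Nat.cast_mul]
        gcongr

theorem count_section_of_injOn_fst [MeasurableSpace Y] [MeasurableSingletonClass Y]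
    {W : Set (X × Y)} (hW : InjOn Prod.fst W) (x : X) :
    Measure.count (Prod.mk x ⁻¹' W) = (Prod.fst '' W).indicator 1 x := by
  by_cases hx : x ∈ Prod.fst '' W
  · obtain ⟨⟨x, y⟩, hy, rfl⟩ := id hx
    have hsingleton : Prod.mk x ⁻¹' W = {y} :=
      eq_singleton_iff_unique_mem.2 ⟨hy, fun z hz => congrArg Prod.snd (hW hz hy rfl)⟩
    rw [hsingleton, indicator_of_mem hx, Measure.count_singleton, Pi.one_apply]
  · have hempty : Prod.mk x ⁻¹' W = ∅ :=
      eq_empty_of_forall_notMem fun z hz => hx ⟨(x, z), hz, rfl⟩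
    rw [hempty, indicator_of_notMem hx, measure_empty]

variable [MeasurableSpace X] [MeasurableSpace Y] [MeasurableSpace Z]

theorem measurableSet_image_fst_of_measurable_count {U : Set (X × Y)}
    (hU : Measurable fun x => Measure.count (Prod.mk x ⁻¹' U)) :
    MeasurableSet (Prod.fst '' U) := by
  have h : Prod.fst '' U = (fun x => Measure.count (Prod.mk x ⁻¹' U)) ⁻¹' {0}ᶜ := by
    ext x
    simp only [mem_preimage, mem_compl_iff, mem_singleton_iff, ← ne_eq, Measure.count_ne_zero_iff]
    exact ⟨fun ⟨⟨_, y⟩, hy, h⟩ => ⟨y, h ▸ hy⟩, fun ⟨y, hy⟩ => ⟨(x, y), hy, rfl⟩⟩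
  exact h ▸ hU (measurableSet_singleton 0).compl

theorem measurable_count_section_of_subset [StandardBorelSpace X] [StandardBorelSpace Y]
    {U V : Set (X × Y)} (hU : MeasurableSet U) (hV : MeasurableSet V) (hVU : V ⊆ U)
    (hinj : InjOn Prod.fst (U \ V))
    (hcount : Measurable fun x => Measure.count (Prod.mk x ⁻¹' V)) :
    Measurable fun x => Measure.count (Prod.mk x ⁻¹' U) := by
  have hsplit (x : X) : Measure.count (Prod.mk x ⁻¹' U) =
      Measure.count (Prod.mk x ⁻¹' V) + (Prod.fst '' (U \ V)).indicator 1 x := by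
    rw [← count_section_of_injOn_fst hinj x,
      ← measure_union (disjoint_sdiff_right.preimage _) (measurable_prodMk_left (hU.diff hV)),
      ← preimage_union, union_sdiff_cancel hVU]
  have hproj : MeasurableSet (Prod.fst '' (U \ V)) :=
    (hU.diff hV).image_of_measurable_injOn measurable_fst hinj
  simp only [hsplit]
  exact hcount.add (measurable_one.indicator hproj)

theorem measurable_count_section_real (n : ℕ) :
    ∀ {X : Type*} [MeasurableSpace X] [StandardBorelSpace X] {U : Set (X × ℝ)},
      MeasurableSet U → (∀ x, (Prod.mk x ⁻¹' U).encard ≤ n) →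
      Measurable fun x => Measure.count (Prod.mk x ⁻¹' U) := by
  induction n with
  | zero =>
    intro X _ _ U _ hn
    have hempty (x : X) : Prod.mk x ⁻¹' U = ∅ := by simpa using hn x
    simp only [hempty, measure_empty, measurable_const]
  | succ n ih =>
    intro X _ _ U hU hn
    let above : Set ((X × ℝ) × ℝ) := {p | p.1 ∈ U ∧ (p.1.1, p.2) ∈ U ∧ p.1.2 < p.2}
    have above_measurable : MeasurableSet above :=
      (measurable_fst hU).inter (((measurable_fst.fst.prodMk measurable_snd) hU).inter
        (measurableSet_lt measurable_fst.snd measurable_snd))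
    have encard_above_le (q : X × ℝ) : (Prod.mk q ⁻¹' above).encard ≤ n := by
      by_cases hq : q ∈ U
      · refine encard_le_of_ssubset_of_encard_le_add_one
          ((ssubset_iff_of_subset fun z hz => hz.2.1).2 ⟨q.2, hq, fun h => ?_⟩)
          (mod_cast hn q.1)
        exact lt_irrefl _ h.2.2
      · have hempty : Prod.mk q ⁻¹' above = ∅ := eq_empty_of_forall_notMem fun z hz => hq hz.1
        simp [hempty]
    have nonmaximalPart_eq : nonmaximalPart U = Prod.fst '' above := by
      ext q
      exact ⟨fun ⟨hq, z, hz⟩ => ⟨(q, z), ⟨hq, hz⟩, rfl⟩,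
        fun ⟨⟨_, z⟩, ⟨hq, hz⟩, h⟩ => h ▸ ⟨hq, z, hz⟩⟩
    have nonmaximalPart_measurable : MeasurableSet (nonmaximalPart U) := nonmaximalPart_eq ▸
      measurableSet_image_fst_of_measurable_count (ih above_measurable encard_above_le)
    exact measurable_count_section_of_subset hU nonmaximalPart_measurable
      (nonmaximalPart_subset U) (injOn_fst_sdiff_nonmaximalPart U)
      (ih nonmaximalPart_measurable fun x =>
        encard_section_nonmaximalPart_le (mod_cast hn x))

variable [StandardBorelSpace X] [StandardBorelSpace Y] [StandardBorelSpace Z]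

theorem measurable_count_section {U : Set (X × Y)} {n : ℕ} (hU : MeasurableSet U)
    (hn : ∀ x, (Prod.mk x ⁻¹' U).encard ≤ n) :
    Measurable fun x => Measure.count (Prod.mk x ⁻¹' U) := by
  obtain ⟨e, he⟩ := exists_measurableEmbedding_real Y
  have hsection (x : X) : Prod.mk x ⁻¹' (Prod.map id e '' U) = e '' (Prod.mk x ⁻¹' U) := by
    ext r
    simp
  have hmeas : MeasurableSet (Prod.map id e '' U) :=
    (MeasurableEmbedding.id.prodMap he).measurableSet_image.2 hU
  have hcount := measurable_count_section_real n hmeas fun x => by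
    rw [hsection, he.injective.encard_image]
    exact hn x
  simpa only [hsection, Measure.count_injective_image he.injective] using hcount

theorem measurableSet_relComp {R : SetRel X Y} {S : SetRel Y Z} {n : ℕ} (hR : MeasurableSet R)
    (hS : MeasurableSet S) (hn : ∀ x, (Prod.mk x ⁻¹' R).encard ≤ n) : MeasurableSet (R ○ S) := by
  let W : Set ((X × Z) × Y) := {q | (q.1.1, q.2) ∈ R ∧ (q.2, q.1.2) ∈ S}
  have hW : MeasurableSet W := ((measurable_fst.fst.prodMk measurable_snd) hR).inter
    ((measurable_snd.prodMk measurable_fst.snd) hS)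
  have hcomp : R ○ S = Prod.fst '' W := by
    ext p
    exact ⟨fun ⟨y, hy⟩ => ⟨(p, y), hy, rfl⟩, fun ⟨⟨_, y⟩, hy, h⟩ => h ▸ ⟨y, hy⟩⟩
  rw [hcomp]
  exact measurableSet_image_fst_of_measurable_count (measurable_count_section hW fun q =>
    (encard_le_encard fun _ hy => hy.1).trans (hn q.1))

end BoundedSections

namespace Graphing

section Components

variable {J P : Type*} {X Z : Set (J × J)} {x y z : J}

theorem mem_compo_self (X : Set (J × J)) (x : J) : x ∈ compo X x := Relation.ReflTransGen.refl

theorem mem_compo_trans (hy : y ∈ compo X x) (hz : z ∈ compo X y) : z ∈ compo X x :=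
  Relation.ReflTransGen.trans hy hz

theorem mem_compo_of_mem (h : (x, y) ∈ X) : y ∈ compo X x := Relation.ReflTransGen.single h

theorem compo_subset_of_forall_mem {S : Set J} (hx : x ∈ S)
    (hS : ∀ u v, u ∈ S → (u, v) ∈ X → v ∈ S) : compo X x ⊆ S := by
  intro y hy
  induction (hy : Relation.ReflTransGen _ x y) with
  | refl => exact hx
  | tail _ huv ih => exact hS _ _ ih huv

theorem compo_mono (h : Z ⊆ X) (x : J) : compo Z x ⊆ compo X x :=
  compo_subset_of_forall_mem (mem_compo_self X x) fun _ _ hu huv =>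
    mem_compo_trans hu (mem_compo_of_mem (h huv))

theorem mem_compo_symm (hX : ∀ x y, (x, y) ∈ X → (y, x) ∈ X) (h : y ∈ compo X x) :
    x ∈ compo X y :=
  compo_subset_of_forall_mem (S := {z | x ∈ compo X z}) (mem_compo_self X x)
    (fun _ _ hu huv => mem_compo_trans (mem_compo_of_mem (hX _ _ huv)) hu) h

theorem compo_eq_of_mem_compo (hX : ∀ x y, (x, y) ∈ X → (y, x) ∈ X) (h : y ∈ compo X x) :
    compo X y = compo X x :=
  Subset.antisymm (fun _ hz => mem_compo_trans h hz)
    fun _ hz => mem_compo_trans (mem_compo_symm hX h) hz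

theorem iUnion_compo {Z : ℕ → Set (J × J)} (hZ : Monotone Z) (x : J) :
    ⋃ n, compo (Z n) x = compo (⋃ n, Z n) x := by
  refine Subset.antisymm (iUnion_subset fun n => compo_mono (subset_iUnion Z n) x)
    (compo_subset_of_forall_mem (mem_iUnion.2 ⟨0, mem_compo_self _ _⟩) fun u v hu huv => ?_)
  obtain ⟨m, hm⟩ := mem_iUnion.1 hu
  obtain ⟨n, hn⟩ := mem_iUnion.1 huv
  exact mem_iUnion.2 ⟨max m n, mem_compo_trans (compo_mono (hZ (le_max_left m n)) x hm)
    (mem_compo_of_mem (hZ (le_max_right m n) hn))⟩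

theorem compo_fiberwise (T : P → Set (J × J)) (p : P) (x : J) :
    compo {q : (P × J) × (P × J) | q.1.1 = q.2.1 ∧ (q.1.2, q.2.2) ∈ T q.1.1} (p, x) =
      Prod.mk p '' compo (T p) x := by
  refine Subset.antisymm (compo_subset_of_forall_mem ⟨x, mem_compo_self _ _, rfl⟩ ?_) ?_
  · rintro _ ⟨p', v⟩ ⟨u, hu, rfl⟩ ⟨h, huv⟩
    obtain rfl : p = p' := h
    exact ⟨v, mem_compo_trans hu (mem_compo_of_mem huv), rfl⟩
  · exact image_subset_iff.2 (compo_subset_of_forall_mem (mem_compo_self _ _)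
      fun u v hu huv => mem_compo_trans hu (mem_compo_of_mem ⟨rfl, huv⟩))

/-- The relation "joined by a path of at most `k` edges of `X`". -/
def reachWithin (X : Set (J × J)) : ℕ → SetRel J J
  | 0 => SetRel.id
  | k + 1 => reachWithin X k ○ (SetRel.id ∪ X)

theorem monotone_reachWithin (X : Set (J × J)) : Monotone (reachWithin X) :=
  monotone_nat_of_le_succ fun _ p hp => ⟨p.2, hp, Or.inl rfl⟩

theorem iUnion_section_reachWithin (X : Set (J × J)) (x : J) :
    ⋃ k, Prod.mk x ⁻¹' reachWithin X k = compo X x := by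
  refine Subset.antisymm (iUnion_subset fun k => ?_)
    (compo_subset_of_forall_mem (mem_iUnion.2 ⟨0, rfl⟩) fun u v hu huv => ?_)
  · induction k with
    | zero => exact fun y (h : x = y) => h ▸ mem_compo_self X x
    | succ k ih =>
      rintro z ⟨y, hy, rfl | hyz⟩
      · exact ih hy
      · exact mem_compo_trans (ih hy) (mem_compo_of_mem hyz)
  · obtain ⟨k, hk⟩ := mem_iUnion.1 hu
    exact mem_iUnion.2 ⟨k + 1, u, hk, Or.inr huv⟩

theorem encard_section_reachWithin_le {D : ℕ} (hD : ∀ x, (Prod.mk x ⁻¹' X).encard ≤ D) (k : ℕ)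
    (x : J) : (Prod.mk x ⁻¹' reachWithin X k).encard ≤ ((D + 1) ^ k : ℕ) := by
  have section_id (y : J) : Prod.mk y ⁻¹' (SetRel.id : SetRel J J) = {y} := by
    ext z
    simp [eq_comm]
  induction k generalizing x with
  | zero => simp only [reachWithin, section_id, encard_singleton, pow_zero, Nat.cast_one, le_refl]
  | succ k ih =>
    refine encard_section_relComp_le ih (fun y => ?_) x
    rw [preimage_union, section_id, singleton_union]
    exact (encard_insert_le _ _).trans (mod_cast add_le_add_left (hD y) 1)

variable [MeasurableSpace J] [StandardBorelSpace J]

theorem measurableSet_reachWithin {D : ℕ} (hX : MeasurableSet X)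
    (hD : ∀ x, (Prod.mk x ⁻¹' X).encard ≤ D) (k : ℕ) : MeasurableSet (reachWithin X k) := by
  have hid : MeasurableSet (SetRel.id : SetRel J J) :=
    measurableSet_eq_fun measurable_fst measurable_snd
  induction k with
  | zero => exact hid
  | succ k ih => exact measurableSet_relComp ih (hid.union hX) (encard_section_reachWithin_le hD k)

theorem measurable_count_compo {D : ℕ} (hX : MeasurableSet X)
    (hD : ∀ x, (Prod.mk x ⁻¹' X).encard ≤ D) :
    Measurable fun x => Measure.count (compo X x) := by
  have hsup (x : J) : Measure.count (compo X x) =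
      ⨆ k, Measure.count (Prod.mk x ⁻¹' reachWithin X k) := by
    rw [← iUnion_section_reachWithin]
    exact Monotone.measure_iUnion fun i j hij => preimage_mono (monotone_reachWithin X hij)
  simp only [hsup]
  exact Measurable.iSup fun k => measurable_count_section (measurableSet_reachWithin hX hD k)
    (encard_section_reachWithin_le hD k)

theorem measurable_count_compo_family [MeasurableSpace P] [StandardBorelSpace P]
    {T : P → Set (J × J)} {D : ℕ} (hT : MeasurableSet {q : P × J × J | q.2 ∈ T q.1})
    (hD : ∀ p x, (Prod.mk x ⁻¹' T p).encard ≤ D) :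
    Measurable fun q : P × J => Measure.count (compo (T q.1) q.2) := by
  let X : Set ((P × J) × (P × J)) := {q | q.1.1 = q.2.1 ∧ (q.1.2, q.2.2) ∈ T q.1.1}
  have hX : MeasurableSet X := (measurableSet_eq_fun measurable_fst.fst measurable_snd.fst).inter
    ((measurable_fst.fst.prodMk (measurable_fst.snd.prodMk measurable_snd.snd)) hT)
  have hsection (q : P × J) : Prod.mk q ⁻¹' X = Prod.mk q.1 '' (Prod.mk q.2 ⁻¹' T q.1) := by
    ext ⟨p, v⟩
    exact ⟨fun ⟨h, hv⟩ => ⟨v, hv, Prod.ext h rfl⟩, fun ⟨_, hv, h⟩ => by cases h; exact ⟨rfl, hv⟩⟩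
  have hcount := measurable_count_compo hX fun q => by
    rw [hsection, (Prod.mk_right_injective q.1).encard_image]
    exact hD q.1 q.2
  have hcompo (q : P × J) : compo X q = Prod.mk q.1 '' compo (T q.1) q.2 :=
    compo_fiberwise T q.1 q.2
  simpa only [hcompo, Measure.count_injective_image (Prod.mk_right_injective _)] using hcount

end Components

section Forests

variable {J : Type*} {Z : Set (J × J)} {x y : J}

theorem IsForestSet.mono {X : Set (J × J)} (hX : IsForestSet X) (h : Z ⊆ X) : IsForestSet Z :=
  fun a b hab hpath =>
    hX a b (h hab) (Relation.ReflTransGen.mono (fun _ _ huv => ⟨h huv.1, huv.2⟩) _ _ hpath)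

theorem IsForestSet.ne (hF : IsForestSet Z) (hxy : (x, y) ∈ Z) : y ≠ x := by
  rintro rfl
  exact hF _ _ hxy Relation.ReflTransGen.refl

/-- The edges of `Z` not incident with the vertex `x`. -/
def deleteVertex (Z : Set (J × J)) (x : J) : Set (J × J) := {q ∈ Z | q.1 ≠ x ∧ q.2 ≠ x}

/-- The vertices reachable from `y` after deleting the vertex `x`; when `(x, y)` is an edge of a
forest, this is the set of vertices lying beyond `y` as seen from `x`. -/
def branch (Z : Set (J × J)) (x y : J) : Set J := compo (deleteVertex Z x) y

theorem notMem_branch (hyx : y ≠ x) : x ∉ branch Z x y := fun h =>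
  compo_subset_of_forall_mem (S := {x}ᶜ) hyx (fun _ _ _ huv => huv.2.2) h rfl

theorem branch_subset_compo (hxy : (x, y) ∈ Z) : branch Z x y ⊆ compo Z x := fun _ hz =>
  mem_compo_trans (mem_compo_of_mem hxy) (compo_mono (sep_subset _ _) y hz)

theorem compo_eq_insert_biUnion_branch (Z : Set (J × J)) (x : J) :
    compo Z x = insert x (⋃ y ∈ Prod.mk x ⁻¹' Z, branch Z x y) := by
  refine Subset.antisymm (compo_subset_of_forall_mem (mem_insert _ _) fun u v hu huv => ?_)
    (insert_subset (mem_compo_self Z x) (iUnion₂_subset fun y hy => branch_subset_compo hy))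
  by_cases hvx : v = x
  · exact Or.inl hvx
  refine Or.inr (mem_iUnion₂.2 ?_)
  by_cases hux : u = x
  · exact ⟨v, hux ▸ huv, mem_compo_self _ _⟩
  · obtain ⟨y, hy, huy⟩ := mem_iUnion₂.1 (hu.resolve_left hux)
    exact ⟨y, hy, mem_compo_trans huy (mem_compo_of_mem ⟨huv, hux, hvx⟩)⟩

theorem compo_eq_branch_union (hZ : ∀ x y, (x, y) ∈ Z → (y, x) ∈ Z) (hxy : (x, y) ∈ Z)
    (hne : y ≠ x) : compo Z x = branch Z x y ∪ branch Z y x := by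
  refine Subset.antisymm
    (compo_subset_of_forall_mem (Or.inr (mem_compo_self _ _)) fun u v hu huv => ?_)
    (union_subset (branch_subset_compo hxy) ?_)
  · by_cases hvx : v = x
    · exact Or.inr (hvx ▸ mem_compo_self _ _)
    by_cases hvy : v = y
    · exact Or.inl (hvy ▸ mem_compo_self _ _)
    obtain hu | hu := hu
    · have hux : u ≠ x := fun h => notMem_branch hne (h ▸ hu)
      exact Or.inl (mem_compo_trans hu (mem_compo_of_mem ⟨huv, hux, hvx⟩))
    · have huy : u ≠ y := fun h => notMem_branch hne.symm (h ▸ hu)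
      exact Or.inr (mem_compo_trans hu (mem_compo_of_mem ⟨huv, huy, hvy⟩))
  · exact compo_eq_of_mem_compo hZ (mem_compo_of_mem hxy) ▸ branch_subset_compo (hZ _ _ hxy)

/-- The edges of `Z` other than the edge joining `x` and `y`. -/
def deleteEdge (Z : Set (J × J)) (x y : J) : Set (J × J) :=
  {q ∈ Z | ¬((q.1 = x ∧ q.2 = y) ∨ (q.1 = y ∧ q.2 = x))}

theorem IsForestSet.notMem_compo_deleteEdge (hF : IsForestSet Z) (hxy : (x, y) ∈ Z) :
    y ∉ compo (deleteEdge Z x y) x :=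
  hF x y hxy

theorem deleteVertex_subset_deleteEdge_left (Z : Set (J × J)) (x y : J) :
    deleteVertex Z x ⊆ deleteEdge Z x y := fun _ ⟨hq, h₁, h₂⟩ =>
  ⟨hq, fun h => h.elim (fun h => h₁ h.1) fun h => h₂ h.2⟩

theorem deleteVertex_subset_deleteEdge_right (Z : Set (J × J)) (x y : J) :
    deleteVertex Z y ⊆ deleteEdge Z x y := fun _ ⟨hq, h₁, h₂⟩ =>
  ⟨hq, fun h => h.elim (fun h => h₂ h.2) fun h => h₁ h.1⟩

theorem mem_branch_symm (hZ : ∀ x y, (x, y) ∈ Z → (y, x) ∈ Z) {z : J} (hz : z ∈ branch Z x y) :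
    y ∈ branch Z x z :=
  mem_compo_symm (fun _ _ h => ⟨hZ _ _ h.1, h.2.2, h.2.1⟩) hz

theorem IsForestSet.disjoint_branch (hF : IsForestSet Z) (hZ : ∀ x y, (x, y) ∈ Z → (y, x) ∈ Z)
    (hxy : (x, y) ∈ Z) : Disjoint (branch Z x y) (branch Z y x) := by
  refine disjoint_left.2 fun z hzy hzx => hF.notMem_compo_deleteEdge hxy ?_
  exact mem_compo_trans (compo_mono (deleteVertex_subset_deleteEdge_right Z x y) x hzx)
    (compo_mono (deleteVertex_subset_deleteEdge_left Z x y) z (mem_branch_symm hZ hzy))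

theorem IsForestSet.pairwiseDisjoint_branch (hF : IsForestSet Z)
    (hZ : ∀ x y, (x, y) ∈ Z → (y, x) ∈ Z) (x : J) :
    (Prod.mk x ⁻¹' Z).PairwiseDisjoint (branch Z x) := by
  intro y hy y' hy' hne
  refine disjoint_left.2 fun z hz hz' => hF.notMem_compo_deleteEdge hy ?_
  have hfirst : (x, y') ∈ deleteEdge Z x y := by
    refine ⟨hy', ?_⟩
    rintro (⟨-, h⟩ | ⟨h, -⟩)
    · exact hne h.symm
    · exact hF.ne hy h.symm
  exact mem_compo_trans (mem_compo_of_mem hfirst) (compo_mono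
    (deleteVertex_subset_deleteEdge_left Z x y) y' (mem_compo_trans hz' (mem_branch_symm hZ hz)))

end Forests

section BranchShare

variable {J : Type*} [MeasurableSpace J] {Z : Set (J × J)} {x y : J}

/-- The proportion of the vertices of the component of `x` that lie in the branch at `x` towards
`y`. -/
noncomputable def branchShare (Z : Set (J × J)) (x y : J) : ℝ≥0∞ :=
  Measure.count (branch Z x y) / Measure.count (compo Z x)

theorem count_compo_ne_zero (Z : Set (J × J)) (x : J) : Measure.count (compo Z x) ≠ 0 :=
  Measure.count_ne_zero_iff.2 ⟨x, mem_compo_self Z x⟩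

theorem measurable_branchShare [StandardBorelSpace J] {D : ℕ} (hZ : MeasurableSet Z)
    (hD : ∀ x, (Prod.mk x ⁻¹' Z).encard ≤ D) :
    Measurable fun p : J × J => branchShare Z p.1 p.2 := by
  have hdelete : MeasurableSet {q : J × J × J | q.2 ∈ deleteVertex Z q.1} :=
    (measurable_snd hZ).inter
      ((measurableSet_eq_fun measurable_snd.fst measurable_fst).compl.inter
        (measurableSet_eq_fun measurable_snd.snd measurable_fst).compl)
  exact (measurable_count_compo_family hdelete fun x y =>
    (encard_le_encard fun _ h => h.1).trans (hD y)).div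
    ((measurable_count_compo hZ hD).comp measurable_fst)

variable [MeasurableSingletonClass J]

theorem count_compo_ne_top (hfin : (compo Z x).Finite) : Measure.count (compo Z x) ≠ ∞ :=
  (Measure.count_apply_lt_top.2 hfin).ne

theorem measurableSet_branch (hfin : (compo Z x).Finite) (hxy : (x, y) ∈ Z) :
    MeasurableSet (branch Z x y) :=
  (hfin.subset (branch_subset_compo hxy)).measurableSet

theorem branchShare_add_branchShare_swap (hF : IsForestSet Z)
    (hZ : ∀ x y, (x, y) ∈ Z → (y, x) ∈ Z) (hfin : (compo Z x).Finite) (hxy : (x, y) ∈ Z) :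
    branchShare Z x y + branchShare Z y x = 1 := by
  have hcompo : compo Z y = compo Z x := compo_eq_of_mem_compo hZ (mem_compo_of_mem hxy)
  rw [branchShare, branchShare, hcompo, ENNReal.div_add_div_same,
    ← measure_union (hF.disjoint_branch hZ hxy)
      (measurableSet_branch (hcompo ▸ hfin) (hZ _ _ hxy)),
    ← compo_eq_branch_union hZ hxy (hF.ne hxy)]
  exact ENNReal.div_self (count_compo_ne_zero Z x) (count_compo_ne_top hfin)

theorem tsum_branchShare_add_inv_count_compo (hF : IsForestSet Z)
    (hZ : ∀ x y, (x, y) ∈ Z → (y, x) ∈ Z) (hfin : (compo Z x).Finite) :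
    ∑' y : Prod.mk x ⁻¹' Z, branchShare Z x y + (Measure.count (compo Z x))⁻¹ = 1 := by
  have hcountable : (Prod.mk x ⁻¹' Z).Countable :=
    (hfin.subset fun _ hy => mem_compo_of_mem hy).countable
  have hbranches : ∑' y : Prod.mk x ⁻¹' Z, Measure.count (branch Z x y) =
      Measure.count (⋃ y ∈ Prod.mk x ⁻¹' Z, branch Z x y) :=
    (measure_biUnion hcountable (hF.pairwiseDisjoint_branch hZ x)
      fun y hy => measurableSet_branch hfin hy).symm
  have hroot : Disjoint (⋃ y ∈ Prod.mk x ⁻¹' Z, branch Z x y) {x} := by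
    simp only [disjoint_singleton_right, mem_iUnion, not_exists]
    exact fun y hy => notMem_branch (hF.ne hy)
  calc ∑' y : Prod.mk x ⁻¹' Z, branchShare Z x y + (Measure.count (compo Z x))⁻¹
      = (Measure.count (⋃ y ∈ Prod.mk x ⁻¹' Z, branch Z x y) + Measure.count {x}) /
          Measure.count (compo Z x) := by
        simp only [branchShare, div_eq_mul_inv, ENNReal.tsum_mul_right, hbranches,
          Measure.count_singleton, add_mul, one_mul]
    _ = Measure.count (compo Z x) / Measure.count (compo Z x) := by
        rw [← measure_union hroot (measurableSet_singleton x), union_singleton,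
          ← compo_eq_insert_biUnion_branch]
    _ = 1 := ENNReal.div_self (count_compo_ne_zero Z x) (count_compo_ne_top hfin)

end BranchShare

section EdgeMeasure

variable {J : Type*} [MeasurableSpace J] (G : Graphing J)

instance : IsProbabilityMeasure G.μ := G.prob

theorem encard_section_le {U : Set (J × J)} (hU : U ⊆ G.edgeSet) (x : J) :
    (Prod.mk x ⁻¹' U).encard ≤ G.D := by
  refine (encard_le_encard (preimage_mono hU)).trans ?_
  have hdeg : (Prod.mk x ⁻¹' G.edgeSet).encard = ({y | G.E x y}.ncard : ℕ∞) :=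
    (G.degFin x).cast_ncard_eq.symm
  rw [hdeg]
  exact_mod_cast G.degBound x

theorem finite_section {U : Set (J × J)} (hU : U ⊆ G.edgeSet) (x : J) :
    (Prod.mk x ⁻¹' U).Finite :=
  finite_of_encard_le_coe (G.encard_section_le hU x)

theorem measurableSet_edgeSet : MeasurableSet G.edgeSet := G.measE

theorem isEdgeSubset_edgeSet : G.IsEdgeSubset G.edgeSet :=
  ⟨G.measurableSet_edgeSet, G.symm, Subset.rfl⟩

variable {G}

theorem IsEdgeSubset.diff {U V : Set (J × J)} (hU : G.IsEdgeSubset U) (hV : G.IsEdgeSubset V) :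
    G.IsEdgeSubset (U \ V) :=
  ⟨hU.1.diff hV.1, fun _ _ h => ⟨hU.2.1 _ _ h.1, fun h' => h.2 (hV.2.1 _ _ h')⟩,
    sdiff_subset.trans hU.2.2⟩

theorem IsEdgeSubset.iUnion {ι : Sort*} [Countable ι] {U : ι → Set (J × J)}
    (hU : ∀ i, G.IsEdgeSubset (U i)) : G.IsEdgeSubset (⋃ i, U i) := by
  refine ⟨.iUnion fun i => (hU i).1, fun x y h => ?_, iUnion_subset fun i => (hU i).2.2⟩
  obtain ⟨i, hi⟩ := mem_iUnion.1 h
  exact mem_iUnion.2 ⟨i, (hU i).2.1 x y hi⟩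

theorem count_section_le {U : Set (J × J)} [MeasurableSingletonClass J] (hU : U ⊆ G.edgeSet)
    (x : J) : Measure.count (Prod.mk x ⁻¹' U) ≤ (G.D : ℝ≥0∞) := by
  rw [Measure.count_apply (G.finite_section hU x).measurableSet]
  exact_mod_cast ENat.toENNReal_le.2 (G.encard_section_le hU x)

variable [StandardBorelSpace J] (G)

/-- The kernel sending a vertex to the counting measure on its neighbours. -/
noncomputable def edgeKernel : Kernel J J where
  toFun x := Measure.count.restrict (Prod.mk x ⁻¹' G.edgeSet)
  measurable' := by
    refine Measure.measurable_of_measurable_coe _ fun S hS => ?_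
    have hcount (x : J) : Measure.count.restrict (Prod.mk x ⁻¹' G.edgeSet) S =
        Measure.count (Prod.mk x ⁻¹' (Prod.snd ⁻¹' S ∩ G.edgeSet)) := Measure.restrict_apply hS
    simp only [hcount]
    exact measurable_count_section ((measurable_snd hS).inter G.measurableSet_edgeSet)
      (G.encard_section_le inter_subset_right)

theorem edgeKernel_apply (x : J) :
    G.edgeKernel x = Measure.count.restrict (Prod.mk x ⁻¹' G.edgeSet) := rfl

instance : IsFiniteKernel G.edgeKernel :=
  ⟨⟨G.D, ENNReal.natCast_lt_top _, fun x => by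
    rw [edgeKernel_apply, Measure.restrict_apply_univ]
    exact count_section_le Subset.rfl x⟩⟩

/-- The edge measure of a graphing on ordered pairs of vertices, without the normalization by the
average degree: choose `x` according to `μ` and count the edges leaving `x`. -/
noncomputable def edgeMeasure : Measure (J × J) := G.μ ⊗ₘ G.edgeKernel

instance : IsFiniteMeasure G.edgeMeasure :=
  inferInstanceAs (IsFiniteMeasure (G.μ ⊗ₘ G.edgeKernel))

variable {G} {U : Set (J × J)}

theorem edgeMeasure_apply (hU : MeasurableSet U) :
    G.edgeMeasure U = ∫⁻ x, Measure.count (Prod.mk x ⁻¹' (U ∩ G.edgeSet)) ∂G.μ := by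
  rw [edgeMeasure, Measure.compProd_apply hU]
  refine lintegral_congr fun x => ?_
  rw [edgeKernel_apply, Measure.restrict_apply (measurable_prodMk_left hU), preimage_inter]

theorem toReal_edgeMeasure (hU : MeasurableSet U) :
    (G.edgeMeasure U).toReal = ∫ x, (degX (U ∩ G.edgeSet) x : ℝ) ∂G.μ := by
  have hsub : U ∩ G.edgeSet ⊆ G.edgeSet := inter_subset_right
  have hmeas := measurable_count_section (hU.inter G.measurableSet_edgeSet)
    (G.encard_section_le hsub)
  rw [edgeMeasure_apply hU, ← integral_toReal hmeas.aemeasurable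
    (.of_forall fun x => (count_section_le hsub x).trans_lt (ENNReal.natCast_lt_top _))]
  exact integral_congr_ae (.of_forall fun x => toReal_count_eq_ncard _)

theorem toReal_edgeMeasure_prod {A B : Set J} (hA : MeasurableSet A) (hB : MeasurableSet B) :
    (G.edgeMeasure (A ×ˢ B)).toReal = ∫ x in A, ({y ∈ B | G.E x y}.ncard : ℝ) ∂G.μ := by
  rw [toReal_edgeMeasure (hA.prod hB), ← integral_indicator hA]
  refine integral_congr_ae (.of_forall fun x => ?_)
  by_cases hx : x ∈ A <;> simp [degX, edgeSet, hx, ofPred_and]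

theorem map_swap_edgeMeasure : G.edgeMeasure.map Prod.swap = G.edgeMeasure := by
  refine Measure.ext_prod fun {A B} hA hB => ?_
  rw [Measure.map_apply measurable_swap (hA.prod hB), preimage_swap_prod,
    ← ENNReal.toReal_eq_toReal_iff' (measure_ne_top _ _) (measure_ne_top _ _),
    toReal_edgeMeasure_prod hB hA, toReal_edgeMeasure_prod hA hB]
  exact G.mp B A hB hA

theorem setLIntegral_edgeMeasure (hU : MeasurableSet U) (hUE : U ⊆ G.edgeSet)
    {f : J × J → ℝ≥0∞} (hf : Measurable f) :
    ∫⁻ p in U, f p ∂G.edgeMeasure = ∫⁻ x, ∑' y : Prod.mk x ⁻¹' U, f (x, y) ∂G.μ := by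
  rw [← lintegral_indicator hU, edgeMeasure, Measure.lintegral_compProd (hf.indicator hU)]
  refine lintegral_congr fun x => ?_
  have hsection : MeasurableSet (Prod.mk x ⁻¹' U) := measurable_prodMk_left hU
  calc ∫⁻ y, U.indicator f (x, y) ∂G.edgeKernel x
      = ∫⁻ y in Prod.mk x ⁻¹' U, f (x, y) ∂G.edgeKernel x :=
        lintegral_indicator hsection fun y => f (x, y)
    _ = ∫⁻ y in Prod.mk x ⁻¹' U, f (x, y) ∂Measure.count := by
        rw [edgeKernel_apply, Measure.restrict_restrict hsection,
          inter_eq_self_of_subset_left (preimage_mono hUE)]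
    _ = ∑' y : Prod.mk x ⁻¹' U, f (x, y) := by
        rw [lintegral_countable _ (G.finite_section hUE x).countable]
        simp only [Measure.count_singleton, mul_one]

theorem setLIntegral_swap_edgeMeasure (hU : MeasurableSet U)
    (hsymm : ∀ x y, (x, y) ∈ U → (y, x) ∈ U) {f : J × J → ℝ≥0∞} (hf : Measurable f) :
    ∫⁻ p in U, f p.swap ∂G.edgeMeasure = ∫⁻ p in U, f p ∂G.edgeMeasure := by
  have hpreimage : Prod.swap ⁻¹' U = U := by
    ext ⟨x, y⟩
    exact ⟨hsymm y x, hsymm x y⟩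
  conv_rhs => rw [← map_swap_edgeMeasure, setLIntegral_map hU hf measurable_swap, hpreimage]

theorem quasiMeasurePreserving_snd_edgeMeasure :
    Measure.QuasiMeasurePreserving Prod.snd G.edgeMeasure G.μ := by
  refine ⟨measurable_snd, Measure.AbsolutelyContinuous.mk fun N hN hN0 => ?_⟩
  have hleft : G.edgeMeasure (N ×ˢ univ) = 0 := by
    rw [edgeMeasure, Measure.compProd_apply_prod hN .univ, setLIntegral_measure_zero _ _ hN0]
  rw [Measure.map_apply measurable_snd hN, ← univ_prod, ← map_swap_edgeMeasure,
    Measure.map_apply measurable_swap (MeasurableSet.univ.prod hN), preimage_swap_prod, hleft]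

theorem ae_forall_of_ae_edgeMeasure {p : J × J → Prop} (hp : ∀ᵐ q ∂G.edgeMeasure, p q) :
    ∀ᵐ x ∂G.μ, ∀ y, G.E x y → p (x, y) := by
  filter_upwards [Measure.ae_ae_of_ae_compProd hp] with x hx
  have hsection : MeasurableSet (Prod.mk x ⁻¹' G.edgeSet) :=
    measurable_prodMk_left G.measurableSet_edgeSet
  rwa [edgeKernel_apply, ae_restrict_iff' hsection, Measure.ae_count_iff] at hx

theorem ae_forall_mem_compo {p : J → Prop} (hp : ∀ᵐ x ∂G.μ, p x) :
    ∀ᵐ x ∂G.μ, ∀ y ∈ compo G.edgeSet x, p y := by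
  let step (r : J → Prop) (x : J) : Prop := ∀ y, G.E x y → r y
  have hstep (k : ℕ) : ∀ᵐ x ∂G.μ, step^[k] p x := by
    induction k with
    | zero => exact hp
    | succ k ih =>
      rw [Function.iterate_succ_apply']
      exact ae_forall_of_ae_edgeMeasure (quasiMeasurePreserving_snd_edgeMeasure.ae ih)
  filter_upwards [ae_all_iff.2 hstep] with x hx y hy
  let S : Set J := {z | ∀ k, step^[k] p z}
  refine compo_subset_of_forall_mem (S := S) hx (fun u v hu huv k => ?_) hy 0
  have hsucc := hu (k + 1)
  rw [Function.iterate_succ_apply'] at hsucc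
  exact hsucc v huv

end EdgeMeasure

section Rank

variable {J : Type*} [MeasurableSpace J] {G : Graphing J} {U Z N : Set (J × J)}

/-- The expected reciprocal `E_u(1 / |V(G^U_u)|)` of the size of the component of a random vertex,
with `1 / ∞ = 0`: the number of finite components per vertex. -/
noncomputable def compoDensity (G : Graphing J) (U : Set (J × J)) : ℝ≥0∞ :=
  ∫⁻ x, (Measure.count (compo U x))⁻¹ ∂G.μ

theorem compoDensity_ne_top [MeasurableSingletonClass J] (G : Graphing J) (U : Set (J × J)) :
    G.compoDensity U ≠ ∞ := by
  have hcount (x : J) : 1 ≤ Measure.count (compo U x) := by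
    rw [← Measure.count_singleton x]
    exact measure_mono (singleton_subset_iff.2 (mem_compo_self U x))
  refine ne_top_of_le_ne_top ENNReal.one_ne_top ?_
  calc G.compoDensity U ≤ ∫⁻ _, 1 ∂G.μ := lintegral_mono fun x => ENNReal.inv_le_one.2 (hcount x)
    _ = 1 := by rw [lintegral_one, measure_univ]

variable [StandardBorelSpace J]

theorem measurable_inv_count_compo (hU : MeasurableSet U) (hUE : U ⊆ G.edgeSet) :
    Measurable fun x => (Measure.count (compo U x))⁻¹ :=
  (measurable_count_compo hU (G.encard_section_le hUE)).inv

theorem rho_eq_one_sub_toReal_compoDensity (hU : MeasurableSet U) (hUE : U ⊆ G.edgeSet) :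
    G.rho U = 1 - (G.compoDensity U).toReal := by
  rw [rho, compoDensity, ← integral_toReal (measurable_inv_count_compo hU hUE).aemeasurable
    (.of_forall fun x => ENNReal.inv_lt_top.2 (pos_iff_ne_zero.2 (count_compo_ne_zero U x)))]
  simp only [ENNReal.toReal_inv, toReal_count_eq_ncard, Nat.card_coe_set_eq, one_div]

theorem edgeMeasure_add_two_mul_compoDensity_of_finite (hZ : G.IsEdgeSubset Z)
    (hF : IsForestSet Z) (hfin : ∀ x, (compo Z x).Finite) :
    G.edgeMeasure Z + 2 * G.compoDensity Z = 2 := by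
  obtain ⟨hZm, hsymm, hZE⟩ := hZ
  let share (p : J × J) : ℝ≥0∞ := branchShare Z p.1 p.2
  have hshare : Measurable share := measurable_branchShare hZm (G.encard_section_le hZE)
  have hedges : G.edgeMeasure Z = 2 * ∫⁻ p in Z, share p ∂G.edgeMeasure :=
    calc G.edgeMeasure Z
        = ∫⁻ p in Z, (share p + share p.swap) ∂G.edgeMeasure := by
          rw [← setLIntegral_one]
          exact setLIntegral_congr_fun hZm fun p hp =>
            (branchShare_add_branchShare_swap hF hsymm (hfin p.1) hp).symm
      _ = 2 * ∫⁻ p in Z, share p ∂G.edgeMeasure := by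
          rw [lintegral_add_left hshare, setLIntegral_swap_edgeMeasure hZm hsymm hshare, two_mul]
  have hvertices : ∫⁻ p in Z, share p ∂G.edgeMeasure + G.compoDensity Z = 1 := by
    rw [setLIntegral_edgeMeasure hZm hZE hshare, compoDensity,
      ← lintegral_add_right _ (measurable_inv_count_compo hZm hZE)]
    simp only [share, tsum_branchShare_add_inv_count_compo hF hsymm (hfin _), lintegral_one,
      measure_univ]
  rw [hedges, ← mul_add, hvertices, mul_one]

theorem compoDensity_diff_null (hUE : U ⊆ G.edgeSet) (hN : G.edgeMeasure N = 0) :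
    G.compoDensity (U \ N) = G.compoDensity U := by
  have hnotMem : ∀ᵐ q ∂G.edgeMeasure, q ∉ N := measure_eq_zero_iff_ae_notMem.1 hN
  refine lintegral_congr_ae ?_
  filter_upwards [ae_forall_mem_compo (ae_forall_of_ae_edgeMeasure hnotMem)] with x hx
  have hcompo : compo (U \ N) x = compo U x := by
    refine Subset.antisymm (compo_mono sdiff_subset x) fun y hy => ?_
    refine (compo_subset_of_forall_mem (S := compo U x ∩ compo (U \ N) x)
      ⟨mem_compo_self _ _, mem_compo_self _ _⟩ (fun u v hu huv => ⟨?_, ?_⟩) hy).2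
    · exact mem_compo_trans hu.1 (mem_compo_of_mem huv)
    · exact mem_compo_trans hu.2
        (mem_compo_of_mem ⟨huv, hx u (compo_mono hUE x hu.1) v (hUE huv)⟩)
  rw [hcompo]

theorem tendsto_compoDensity {Z : ℕ → Set (J × J)} (hmono : Monotone Z)
    (hZ : ∀ n, G.IsEdgeSubset (Z n)) :
    Tendsto (fun n => G.compoDensity (Z n)) atTop (𝓝 (G.compoDensity (⋃ n, Z n))) := by
  have hcompo (x : J) : Monotone fun n => compo (Z n) x := fun _ _ h => compo_mono (hmono h) x
  refine lintegral_tendsto_of_tendsto_of_antitone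
    (fun n => (measurable_inv_count_compo (hZ n).1 (hZ n).2.2).aemeasurable)
    (.of_forall fun x m n h => ENNReal.inv_le_inv.2 (measure_mono (hcompo x h)))
    (G.compoDensity_ne_top (Z 0)) (.of_forall fun x => ?_)
  rw [← iUnion_compo hmono x]
  exact tendsto_inv_iff.2 (tendsto_measure_iUnion_atTop (hcompo x))

theorem IsEdgeSubset.toReal_edgeMeasure (hU : G.IsEdgeSubset U) :
    (G.edgeMeasure U).toReal = ∫ x, (degX U x : ℝ) ∂G.μ := by
  rw [Graphing.toReal_edgeMeasure hU.1, inter_eq_self_of_subset_left hU.2.2]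

theorem IsEdgeSubset.avgDeg_mul_eta (hU : G.IsEdgeSubset U) :
    G.avgDeg * G.eta U = (G.edgeMeasure U).toReal := by
  have hle : (G.edgeMeasure U).toReal ≤ G.avgDeg :=
    (ENNReal.toReal_mono (measure_ne_top _ _) (measure_mono hU.2.2)).trans_eq
      G.isEdgeSubset_edgeSet.toReal_edgeMeasure
  rw [eta, ← hU.toReal_edgeMeasure]
  -- If `d̄ = 0`, division by zero makes `η U` vanish, and the edge measure of `U` vanishes too.
  exact mul_div_cancel_of_imp' fun h => le_antisymm (h ▸ hle) ENNReal.toReal_nonneg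

theorem Hyperfinite.exists_antitone (hH : G.Hyperfinite) :
    ∃ Y : ℕ → Set (J × J), Antitone Y ∧ (∀ n, G.IsEdgeSubset (Y n)) ∧
      (∀ n x, (compo (G.edgeSet \ Y n) x).Finite) ∧ G.edgeMeasure (⋂ n, Y n) = 0 := by
  choose X hX heta hfin using fun n : ℕ => hH ((1 / 2) ^ n) (by positivity)
  have havgDeg : 0 ≤ G.avgDeg := integral_nonneg fun _ => Nat.cast_nonneg _
  have hsummable : Summable fun n => (G.edgeMeasure (X n)).toReal := by
    refine Summable.of_nonneg_of_le (fun _ => ENNReal.toReal_nonneg) (fun n => ?_)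
      (summable_geometric_two.mul_left G.avgDeg)
    rw [← (hX n).avgDeg_mul_eta]
    exact mul_le_mul_of_nonneg_left (heta n).le havgDeg
  have htsum : ∑' n, G.edgeMeasure (X n) ≠ ∞ := by
    simpa only [ENNReal.ofReal_toReal (measure_ne_top G.edgeMeasure _)]
      using hsummable.tsum_ofReal_ne_top
  refine ⟨fun n => ⋃ m ≥ n, X m, fun m n hmn => ?_, fun n => ?_, fun n x => ?_, ?_⟩
  · exact biUnion_mono (fun _ hk => hmn.trans hk) fun _ _ => Subset.rfl
  · exact .iUnion fun m => .iUnion fun _ => hX m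
  · exact (hfin n x).subset
      (compo_mono (sdiff_subset_sdiff_right (subset_biUnion_of_mem (u := X) le_rfl)) x)
  · have hlimsup := measure_limsup_atTop_eq_zero htsum
    rwa [limsup_eq_iInf_iSup_of_nat] at hlimsup

theorem Hyperfinite.edgeMeasure_add_two_mul_compoDensity (hH : G.Hyperfinite)
    (hU : G.IsEdgeSubset U) (hF : IsForestSet U) :
    G.edgeMeasure U + 2 * G.compoDensity U = 2 := by
  obtain ⟨Y, hanti, hY, hfin, hnull⟩ := hH.exists_antitone
  let Z (n : ℕ) : Set (J × J) := U \ Y n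
  have hmono : Monotone Z := fun _ _ h => sdiff_subset_sdiff_right (hanti h)
  have hZ (n : ℕ) : G.IsEdgeSubset (Z n) := hU.diff (hY n)
  have hZfin (n : ℕ) (x : J) : (compo (Z n) x).Finite :=
    (hfin n x).subset (compo_mono (sdiff_subset_sdiff_left hU.2.2) x)
  have hunion : ⋃ n, Z n = U \ ⋂ n, Y n := (sdiff_iInter U Y).symm
  have hedges : Tendsto (fun n => G.edgeMeasure (Z n)) atTop (𝓝 (G.edgeMeasure U)) := by
    rw [← measure_sdiff_null hnull, ← hunion]
    exact tendsto_measure_iUnion_atTop hmono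
  have hcompos : Tendsto (fun n => G.compoDensity (Z n)) atTop (𝓝 (G.compoDensity U)) := by
    rw [← compoDensity_diff_null hU.2.2 hnull, ← hunion]
    exact tendsto_compoDensity hmono hZ
  refine tendsto_nhds_unique
    (hedges.add (ENNReal.Tendsto.const_mul hcompos (.inr ENNReal.ofNat_ne_top))) ?_
  simp only [edgeMeasure_add_two_mul_compoDensity_of_finite (hZ _)
    (hF.mono sdiff_subset) (hZfin _), tendsto_const_nhds]

end Rank

theorem rho_eq_of_hyperfinite_forest_general {J : Type*} [MeasurableSpace J]
    [StandardBorelSpace J] (G : Graphing J) (hH : G.Hyperfinite) {U : Set (J × J)}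
    (hU : G.IsEdgeSubset U) (hF : IsForestSet U) : G.rho U = (G.avgDeg / 2) * G.eta U := by
  have htwo := congrArg ENNReal.toReal (hH.edgeMeasure_add_two_mul_compoDensity hU hF)
  rw [ENNReal.toReal_add (measure_ne_top _ _) (ENNReal.mul_ne_top ENNReal.ofNat_ne_top
    (G.compoDensity_ne_top U)), ENNReal.toReal_mul, ENNReal.toReal_ofNat,
    ← hU.avgDeg_mul_eta] at htwo
  rw [rho_eq_one_sub_toReal_compoDensity hU.1 hU.2.2]
  linarith

end Graphing

/-- For a hyperfinite graphing `G` all of whose connected components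
are trees, `ρ(U) = (d̄/2)·η(U)` for every Borel edge set `U ⊆ E`; in particular `ρ` is
(countably) additive on Borel subsets of `E` and `ρ(E) = d̄/2`. -/
theorem Graphing.rho_eq_of_hyperfinite_forest {J : Type*} [MeasurableSpace J]
    [StandardBorelSpace J] (G : Graphing J) (hH : G.Hyperfinite) (hF : G.IsForest) :
    (∀ U : Set (J × J), G.IsEdgeSubset U → G.rho U = (G.avgDeg / 2) * G.eta U) ∧
    G.rho G.edgeSet = G.avgDeg / 2 := by
  have hrho (U : Set (J × J)) (hU : G.IsEdgeSubset U) : G.rho U = (G.avgDeg / 2) * G.eta U :=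
    G.rho_eq_of_hyperfinite_forest_general hH hU (hF.mono hU.2.2)
  refine ⟨hrho, ?_⟩
  have havgDeg : G.avgDeg * G.eta G.edgeSet = G.avgDeg :=
    G.isEdgeSubset_edgeSet.avgDeg_mul_eta.trans G.isEdgeSubset_edgeSet.toReal_edgeMeasure
  rw [hrho _ G.isEdgeSubset_edgeSet, div_mul_eq_mul_div, havgDeg]
end
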